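/- Let n ≥ 1 and c = (c_1,...,c_{n+1}) be indeterminates. Then det_{1≤k,ℓ≤n}( e_{k-ℓ}(c) + (-1)^{ℓ-1} e_{k+ℓ}(c) ) = Σ_{α ∈ 𝒜, ℓ(α) ≤ n+1} s_α(c), where 𝒜 is the set of partitions whose Frobenius notation (a_1,...,a_r | b_1,...,b_r) satisfies b_i = a_i + 1 for all i, and s_α(c) is the Schur polynomial in the n+1 variables c. -/

import Mathlib

open Finset

/-- Complete homogeneous symmetric polynomial of degree `r` evaluated at `x`. -/
noncomputable def hpoly {σ : Type*} [Fintype σ] [DecidableEq σ] {R : Type*} [CommRing R]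
    (x : σ → R) (r : ℕ) : R :=
  ∑ d ∈ (Finset.univ : Finset (σ → Fin (r + 1))).filter (fun d => ∑ i, (d i : ℕ) = r),
    ∏ i, x i ^ ((d i : ℕ))

/-- `hpoly` with integer index, zero for negative degrees. -/
noncomputable def hpolyZ {σ : Type*} [Fintype σ] [DecidableEq σ] {R : Type*} [CommRing R]
    (x : σ → R) (k : ℤ) : R :=
  if 0 ≤ k then hpoly x k.toNat else 0

/-- A partition: weakly decreasing, eventually zero sequence of naturals (0-indexed parts,
so `parts 0` is the first part). -/
structure Partn where
  parts : ℕ → ℕ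
  antitone' : Antitone parts
  eventually_zero : ∃ N, ∀ i, N ≤ i → parts i = 0

/-- The conjugate partition: `conj p j` is the number of parts exceeding `j`
(the length of column `j+1`). -/
noncomputable def Partn.conj (p : Partn) (j : ℕ) : ℕ :=
  Nat.card {i : ℕ | j < p.parts i}

/-- Number of nonzero parts. -/
noncomputable def Partn.len (p : Partn) : ℕ :=
  Nat.card {i : ℕ | 0 < p.parts i}

/-- Membership in `𝒫₁ = 𝒞`: in Frobenius notation every arm length exceeds the
corresponding leg length by exactly 1 (armᵢ = partsᵢ - i - 1, legᵢ = conjᵢ - i - 1,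
0-indexed along the diagonal `i < parts i`). -/
def Partn.InC (p : Partn) : Prop :=
  ∀ i, i < p.parts i → p.parts i = p.conj i + 1

/-- Membership in `𝒫₋₁ = 𝒜` (conjugates of `𝒫₁`): every leg length exceeds the
corresponding arm length by exactly 1. -/
def Partn.InA (p : Partn) : Prop :=
  ∀ i, i < p.parts i → p.conj i = p.parts i + 1

/-- Schur polynomial in `n` variables via the Jacobi–Trudi determinant
`s_p = det(h_{p_i - i + j})_{1 ≤ i,j ≤ ℓ(p)}`; this vanishes when `ℓ(p) > n`. -/
noncomputable def schur {n : ℕ} {R : Type*} [CommRing R] (x : Fin n → R) (p : Partn) : R :=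
  Matrix.det (Matrix.of fun i j : Fin p.len =>
    hpolyZ x ((p.parts i : ℤ) - (i : ℕ) + (j : ℕ)))

/-- Skew Schur polynomial `s_{lam/mu}` in `n` variables via the Jacobi–Trudi determinant
`det(h_{lam_i - mu_j - i + j})`; this vanishes unless `mu ⊆ lam`. -/
noncomputable def skewSchur {n : ℕ} {R : Type*} [CommRing R] (x : Fin n → R)
    (lam mu : Partn) : R :=
  Matrix.det (Matrix.of fun i j : Fin (max lam.len mu.len) =>
    hpolyZ x ((lam.parts i : ℤ) - (mu.parts j : ℕ) - (i : ℕ) + (j : ℕ)))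

/-- Elementary symmetric polynomial of degree `r` evaluated at `x`. -/
noncomputable def epoly {σ : Type*} [Fintype σ] [DecidableEq σ] {R : Type*} [CommRing R]
    (x : σ → R) (r : ℕ) : R :=
  ∑ s ∈ Finset.univ.powersetCard r, ∏ i ∈ s, x i

/-- `epoly` with integer index, zero for negative degrees. -/
noncomputable def epolyZ {σ : Type*} [Fintype σ] [DecidableEq σ] {R : Type*} [CommRing R]
    (x : σ → R) (k : ℤ) : R :=
  if 0 ≤ k then epoly x k.toNat else 0

theorem Partn.lt_conj_iff (p : Partn) (j i : ℕ) : i < p.conj j ↔ j < p.parts i := by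
  classical
  obtain ⟨N, hN⟩ := p.eventually_zero
  have hex : ∃ m, ¬ j < p.parts m := ⟨N, by simp [hN N le_rfl]⟩
  have key : {i : ℕ | j < p.parts i} = Set.Iio (Nat.find hex) := by
    ext a
    simp only [Set.mem_setOf_eq, Set.mem_Iio, Nat.lt_find_iff, not_not]
    exact ⟨fun h m hm => lt_of_lt_of_le h (p.antitone' hm), fun h => h a le_rfl⟩
  have hc : p.conj j = Nat.find hex := by
    unfold Partn.conj
    rw [key]
    simp
  rw [hc]
  have := Set.ext_iff.1 key i
  simpa using this.symm

theorem Partn.conj_eq (p : Partn) (j m : ℕ) (h : ∀ i, i < m ↔ j < p.parts i) :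
    p.conj j = m := by
  have h1 := fun i => (p.lt_conj_iff j i).trans (h i).symm
  have a := h1 m
  have b := h1 (p.conj j)
  omega

theorem Partn.len_eq_conj (p : Partn) : p.len = p.conj 0 := rfl

theorem Partn.ext' (p q : Partn) (h : ∀ i, p.parts i = q.parts i) : p = q := by
  cases p; cases q
  congr
  funext i
  exact h i

theorem Partn.len_le_iff (p : Partn) (m : ℕ) : p.len ≤ m ↔ p.parts m = 0 := by
  rw [p.len_eq_conj]
  have := p.lt_conj_iff 0 m
  omega

def InAn (n : ℕ) (α : Partn) : Prop := α.InA ∧ α.len ≤ n + 1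

theorem InAn.first_le {n : ℕ} {α : Partn} (h : InAn n α) : α.parts 0 ≤ n := by
  rcases Nat.eq_zero_or_pos (α.parts 0) with h0 | h0
  · omega
  · have := h.1 0 h0
    have := h.2
    rw [α.len_eq_conj] at this
    omega

theorem inAn_zero (α : Partn) : InAn 0 α ↔ ∀ i, α.parts i = 0 := by
  constructor
  · intro h i
    have := h.first_le
    have := α.antitone' (Nat.zero_le i)
    omega
  · intro h
    refine ⟨fun i hi => ?_, ?_⟩
    · rw [h i] at hi; omega
    · rw [α.len_le_iff]; exact h _

/-- prepend part `n+1` to `β + (1^{n+1})`. -/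
def grow (n : ℕ) (β : Partn) : Partn where
  parts i := if i = 0 then max (n + 1) (β.parts 0 + 1)
    else if i ≤ n + 1 then β.parts (i - 1) + 1 else 0
  antitone' := by
    intro a b hab
    have h1 := β.antitone' (show a - 1 ≤ b - 1 by omega)
    have h2 := β.antitone' (Nat.zero_le (b - 1))
    dsimp only
    split_ifs <;> omega
  eventually_zero := ⟨n + 2, fun i hi => by
    rw [if_neg (by omega), if_neg (by omega)]⟩

theorem grow_parts_zero {n : ℕ} {β : Partn} (h : InAn n β) : (grow n β).parts 0 = n + 1 := by
  have := h.first_le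
  simp only [grow, if_true]
  omega

theorem grow_parts_succ (n : ℕ) (β : Partn) (i : ℕ) (hi : i ≤ n) :
    (grow n β).parts (i + 1) = β.parts i + 1 := by
  simp [grow, hi]

theorem grow_parts_big (n : ℕ) (β : Partn) (i : ℕ) (hi : n < i) :
    (grow n β).parts (i + 1) = 0 := by
  simp [grow]; omega

theorem grow_inAn {n : ℕ} {β : Partn} (h : InAn n β) : InAn (n + 1) (grow n β) := by
  have hf := h.first_le
  refine ⟨?_, by rw [Partn.len_le_iff]; exact grow_parts_big n β _ (by omega)⟩
  intro i hi
  rcases i with _ | i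
  · rw [grow_parts_zero h]
    apply Partn.conj_eq
    intro j
    rcases j with _ | j
    · rw [grow_parts_zero h]; omega
    · rcases Nat.lt_or_ge n j with hj | hj
      · rw [grow_parts_big n β j hj]; omega
      · rw [grow_parts_succ n β j hj]; omega
  · have hin : i ≤ n := by
      by_contra hc
      rw [grow_parts_big n β i (by omega)] at hi
      omega
    rw [grow_parts_succ n β i hin] at hi ⊢
    have hb := h.1 i (by omega)
    have hle := β.antitone' (Nat.zero_le i)
    apply Partn.conj_eq
    intro j
    rcases j with _ | j
    · rw [grow_parts_zero h]; omega
    · have hc := β.lt_conj_iff i j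
      rcases Nat.lt_or_ge n j with hj | hj
      · rw [grow_parts_big n β j hj]
        have := (β.len_le_iff (n + 1)).1 h.2
        have := β.antitone' (show n + 1 ≤ j by omega)
        omega
      · rw [grow_parts_succ n β j hj]; omega

theorem grow_not_inAn {n : ℕ} {β : Partn} : ¬ InAn n (grow n β) := by
  intro h
  have := (Partn.len_le_iff _ _).1 h.2
  rw [grow_parts_succ n β n le_rfl] at this
  omega

theorem grow_inj {n : ℕ} {β γ : Partn} (hβ : InAn n β) (hγ : InAn n γ)
    (h : grow n β = grow n γ) : β = γ := by
  apply Partn.ext'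
  intro i
  rcases Nat.lt_or_ge n i with hi | hi
  · have h1 := (β.len_le_iff (n + 1)).1 hβ.2
    have h2 := β.antitone' (show n + 1 ≤ i by omega)
    have h3 := (γ.len_le_iff (n + 1)).1 hγ.2
    have h4 := γ.antitone' (show n + 1 ≤ i by omega)
    omega
  · have h1 := grow_parts_succ n β i hi
    rw [h, grow_parts_succ n γ i hi] at h1
    omega

theorem inAn_succ {n : ℕ} {α : Partn} (h : InAn (n + 1) α) :
    InAn n α ∨ ∃ β, InAn n β ∧ grow n β = α := by
  by_cases hl : α.len ≤ n + 1
  · exact Or.inl ⟨h.1, hl⟩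
  right
  have hl2 : α.len = n + 2 := by have := h.2; omega
  rw [α.len_eq_conj] at hl2
  have hpos : ∀ i, i ≤ n + 1 → 0 < α.parts i := fun i hi =>
    (α.lt_conj_iff 0 i).1 (by omega)
  have hzero : ∀ i, n + 2 ≤ i → α.parts i = 0 := fun i hi => by
    have := α.lt_conj_iff 0 i
    omega
  have h0 : α.parts 0 = n + 1 := by
    have := h.1 0 (hpos 0 (by omega))
    omega
  let β : Partn := ⟨fun i => α.parts (i + 1) - 1, fun a b hab => by
      have := α.antitone' (show a + 1 ≤ b + 1 by omega)
      dsimp only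
      omega, ⟨n + 1, fun i hi => by rw [hzero (i + 1) (by omega)]⟩⟩
  have hβ : InAn n β := by
    refine ⟨fun i hi => ?_, ?_⟩
    · change i < α.parts (i + 1) - 1 at hi
      change β.conj i = α.parts (i + 1) - 1 + 1
      have h1 := h.1 (i + 1) (by omega)
      apply Partn.conj_eq
      intro j
      change _ ↔ i < α.parts (j + 1) - 1
      have := α.lt_conj_iff (i + 1) (j + 1)
      omega
    · rw [Partn.len_le_iff]
      change α.parts (n + 1 + 1) - 1 = 0
      rw [hzero _ (by omega)]
  refine ⟨β, hβ, ?_⟩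
  apply Partn.ext'
  intro i
  rcases i with _ | i
  · rw [grow_parts_zero hβ, h0]
  · rcases Nat.lt_or_ge n i with hi | hi
    · rw [grow_parts_big n β i hi, hzero _ (by omega)]
    · rw [grow_parts_succ n β i hi]
      change α.parts (i + 1) - 1 + 1 = _
      have := hpos (i + 1) (by omega)
      omega

theorem alt_snoc {R V : Type*} [CommRing R] [AddCommGroup V] [Module R V] {n : ℕ}
    (g : V [⋀^Fin (n + 1 + 1)]→ₗ[R] R) (r : Fin (n + 1) → V) (v : V) :
    g (Fin.snoc (α := fun _ => V) r v) = (-1) ^ (n + 1) * g (Fin.cons v r) := by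
  rw [Fin.snoc_eq_cons_rotate]
  have := g.map_perm (Fin.cons v r) (finRotate (n + 1 + 1))
  rw [sign_finRotate] at this
  rw [Function.comp_def] at this
  rw [this]
  simp [Units.smul_def]

theorem alt_expand {R V : Type*} [CommRing R] [AddCommGroup V] [Module R V] (f : ℤ → V) (n : ℕ) :
    ∃ F : Finset Partn, (∀ α, α ∈ F ↔ InAn n α) ∧
      ∀ g : V [⋀^Fin (n + 1)]→ₗ[R] R,
        g (fun i => if (i : ℕ) = 0 then f 0
            else f (-(i : ℕ)) + (-1 : R) ^ (i : ℕ) • f ((i : ℕ))) =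
          ∑ α ∈ F, g (fun i => f ((α.parts i : ℤ) - (i : ℕ))) := by
  classical
  induction n with
  | zero =>
    refine ⟨{⟨fun _ => 0, fun _ _ _ => le_rfl, ⟨0, fun _ _ => rfl⟩⟩}, ?_, ?_⟩
    · intro α
      rw [Finset.mem_singleton, inAn_zero]
      exact ⟨fun h => by rw [h]; simp, fun h => Partn.ext' _ _ h⟩
    · intro g
      rw [Finset.sum_singleton]
      congr 1
      funext i
      have : i = 0 := Fin.ext (by have := i.2; simp)
      subst this
      simp
  | succ n ih =>
    obtain ⟨F, hF, hg⟩ := ih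
    refine ⟨F ∪ F.image (grow n), ?_, ?_⟩
    · intro α
      simp only [Finset.mem_union, Finset.mem_image, hF]
      constructor
      · rintro (h | ⟨β, hβ, rfl⟩)
        · exact ⟨h.1, by have := h.2; omega⟩
        · exact grow_inAn hβ
      · exact inAn_succ
    · intro g
      rw [Finset.sum_union, Finset.sum_image]
      rotate_left
      · intro β hβ γ hγ h
        exact grow_inj ((hF _).1 hβ) ((hF _).1 hγ) h
      · rw [Finset.disjoint_left]
        intro α hα hα'
        obtain ⟨β, -, rfl⟩ := Finset.mem_image.1 hα'
        exact grow_not_inAn ((hF _).1 hα)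
      set r : Fin (n + 1) → V := fun i => if (i : ℕ) = 0 then f 0
            else f (-(i : ℕ)) + (-1 : R) ^ (i : ℕ) • f ((i : ℕ)) with hr
      have h1 : (fun i : Fin (n + 1 + 1) => if (i : ℕ) = 0 then f 0
            else f (-(i : ℕ)) + (-1 : R) ^ (i : ℕ) • f ((i : ℕ))) =
          Fin.snoc (α := fun _ => V) r
            (f (-((n + 1 : ℕ) : ℤ)) + (-1 : R) ^ (n + 1) • f ((n + 1 : ℕ))) := by
        funext i
        refine Fin.lastCases ?_ (fun i => ?_) i
        · simp
        · rw [Fin.snoc_castSucc]; simp [hr]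
      rw [h1, alt_snoc]
      have h2 : ∀ v, g (Fin.cons v r) =
          ∑ α ∈ F, g (Fin.cons v (fun i : Fin (n + 1) => f ((α.parts i : ℤ) - (i : ℕ)))) := by
        intro v
        exact hg (g.curryLeft v)
      have h3 : ∀ v w : V, ∀ c : R, g (Fin.cons (v + c • w) r) =
          g (Fin.cons v r) + c * g (Fin.cons w r) := by
        intro v w c
        have := congrArg (fun t => t r) (g.curryLeft.map_add v (c • w))
        rw [g.curryLeft.map_smul] at this
        exact this
      rw [h3, mul_add, ← mul_assoc, ← pow_add, ← two_mul, pow_mul]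
      simp only [neg_one_sq, one_pow, one_mul]
      rw [h2, h2, Finset.mul_sum]
      congr 1
      · apply Finset.sum_congr rfl
        intro α hα
        rw [← alt_snoc]
        congr 1
        funext i
        refine Fin.lastCases ?_ (fun i => ?_) i
        · have := (α.len_le_iff _).1 ((hF _).1 hα).2
          simp [this]
        · rw [Fin.snoc_castSucc]; simp
      · apply Finset.sum_congr rfl
        intro α hα
        congr 1
        funext i
        refine Fin.cases ?_ (fun i => ?_) i
        · rw [Fin.cons_zero, Fin.val_zero, grow_parts_zero ((hF _).1 hα)]; simp
        · rw [Fin.cons_succ, Fin.val_succ, grow_parts_succ n α i (by omega)]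
          congr 1
          push_cast
          ring

theorem hpoly_zero' {σ : Type*} [Fintype σ] [DecidableEq σ] {R : Type*} [CommRing R]
    (x : σ → R) : hpoly x 0 = 1 := by
  unfold hpoly
  rw [Finset.filter_true_of_mem (by intro d _; simp)]
  simp

theorem epoly_zero' {σ : Type*} [Fintype σ] [DecidableEq σ] {R : Type*} [CommRing R]
    (x : σ → R) : epoly x 0 = 1 := by
  simp [epoly]

theorem hpolyZ_natCast {σ : Type*} [Fintype σ] [DecidableEq σ] {R : Type*} [CommRing R]
    (x : σ → R) (k : ℕ) : hpolyZ x (k : ℤ) = hpoly x k := by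
  simp [hpolyZ]

theorem hpolyZ_neg {σ : Type*} [Fintype σ] [DecidableEq σ] {R : Type*} [CommRing R]
    (x : σ → R) (k : ℤ) (hk : k < 0) : hpolyZ x k = 0 := by
  simp [hpolyZ, hk]

theorem hpolyZ_zero {σ : Type*} [Fintype σ] [DecidableEq σ] {R : Type*} [CommRing R]
    (x : σ → R) : hpolyZ x 0 = 1 := by
  simp [hpolyZ, hpoly_zero']

theorem coeff_hpoly {σ : Type*} [Fintype σ] [DecidableEq σ] {R : Type*} [CommRing R]
    (x : σ → R) (r : ℕ) :
    PowerSeries.coeff r (∏ i, PowerSeries.mk (fun k => x i ^ k)) = hpoly x r := by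
  rw [PowerSeries.coeff_prod]
  unfold hpoly
  symm
  refine Finset.sum_bij (fun d _ => Finsupp.equivFunOnFinite.symm (fun i => (d i : ℕ))) ?_ ?_ ?_ ?_
  · intro d hd
    rw [Finset.mem_filter] at hd
    rw [Finset.mem_finsuppAntidiag]
    exact ⟨by simpa using hd.2, Finset.subset_univ _⟩
  · intro d _ d' _ h
    funext i
    have := DFunLike.congr_fun h i
    exact Fin.ext this
  · intro l hl
    rw [Finset.mem_finsuppAntidiag] at hl
    have hle : ∀ i, l i < r + 1 := fun i => by
      have := Finset.single_le_sum (f := fun i => l i) (fun _ _ => Nat.zero_le _) (Finset.mem_univ i)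
      have h2 : ∑ i, l i = r := hl.1
      omega
    refine ⟨fun i => ⟨l i, hle i⟩, ?_, ?_⟩
    · rw [Finset.mem_filter]
      exact ⟨Finset.mem_univ _, hl.1⟩
    · ext i; rfl
  · intro d _
    simp

theorem coeff_epoly {σ : Type*} [Fintype σ] [DecidableEq σ] {R : Type*} [CommRing R]
    (x : σ → R) (r : ℕ) :
    PowerSeries.coeff r (∏ i, (1 + PowerSeries.C (-x i) * PowerSeries.X)) =
      (-1) ^ r * epoly x r := by
  rw [Finset.prod_one_add, map_sum]
  have : ∀ t : Finset σ, PowerSeries.coeff r (∏ i ∈ t, (PowerSeries.C (-x i) * PowerSeries.X)) =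
      if t.card = r then (-1) ^ r * ∏ i ∈ t, x i else 0 := by
    intro t
    rw [Finset.prod_mul_distrib, ← map_prod, Finset.prod_const, PowerSeries.coeff_C_mul,
      PowerSeries.coeff_X_pow]
    by_cases h : t.card = r
    · subst h
      simp [Finset.prod_neg]
    · rw [if_neg h, if_neg (Ne.symm h), mul_zero]
  simp_rw [this]
  rw [← Finset.sum_filter, ← Finset.mul_sum]
  unfold epoly
  congr 1
  apply Finset.sum_congr _ (fun _ _ => rfl)
  ext t
  simp [Finset.mem_powersetCard]

theorem eh_rel {σ : Type*} [Fintype σ] [DecidableEq σ] {R : Type*} [CommRing R]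
    (x : σ → R) (r : ℕ) (hr : r ≠ 0) :
    ∑ t ∈ Finset.range (r + 1), ((-1) ^ t * epoly x t) * hpoly x (r - t) = 0 := by
  have h1 : (∏ i, (1 + PowerSeries.C (-x i) * PowerSeries.X)) *
      (∏ i, PowerSeries.mk (fun k => x i ^ k)) = 1 := by
    rw [← Finset.prod_mul_distrib]
    apply Finset.prod_eq_one
    intro i _
    ext k
    rw [add_mul, one_mul, mul_assoc, map_add, PowerSeries.coeff_C_mul]
    rcases k with _ | k
    · simp
    · rw [PowerSeries.coeff_succ_X_mul]
      simp [pow_succ, PowerSeries.coeff_one]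
      ring
  have h2 := congrArg (PowerSeries.coeff r) h1
  rw [PowerSeries.coeff_mul, Finset.Nat.sum_antidiagonal_eq_sum_range_succ
    (fun a b => PowerSeries.coeff a (∏ i, (1 + PowerSeries.C (-x i) * PowerSeries.X)) *
      PowerSeries.coeff b (∏ i, PowerSeries.mk (fun k => x i ^ k)))] at h2
  simp_rw [coeff_epoly, coeff_hpoly] at h2
  rw [h2, PowerSeries.coeff_one, if_neg hr]

theorem schur_pad {n : ℕ} {R : Type*} [CommRing R] (x : Fin n → R) (p : Partn) (N : ℕ)
    (h : p.len ≤ N) :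
    Matrix.det (Matrix.of fun i j : Fin N =>
      hpolyZ x ((p.parts i : ℤ) - (i : ℕ) + (j : ℕ))) = schur x p := by
  induction N, h using Nat.le_induction with
  | base => rfl
  | succ N hN ih =>
    rw [← ih, Matrix.det_succ_row _ (Fin.last N), Fin.sum_univ_castSucc]
    have h0 := (p.len_le_iff N).1 hN
    rw [Finset.sum_eq_zero]
    · have : ((p.parts N : ℤ) - (N : ℕ) + (N : ℕ)) = 0 := by rw [h0]; simp
      simp only [Matrix.of_apply, Fin.val_last, this, hpolyZ_zero]
      rw [Even.neg_one_pow ⟨N, rfl⟩]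
      simp only [zero_add, one_mul]
      congr 1
      ext i j
      simp [Matrix.submatrix]
    · intro j _
      rw [Matrix.of_apply, hpolyZ_neg, mul_zero, zero_mul]
      have := j.2
      simp [h0]

theorem det_duality {R : Type*} [CommRing R] {n : ℕ} (c : Fin (n + 1) → R) :
    Matrix.det (Matrix.of fun k l : Fin n =>
        epolyZ c ((k : ℤ) - (l : ℕ)) + (-1 : R) ^ (l : ℕ) * epoly c ((k : ℕ) + (l : ℕ) + 2)) =
    Matrix.det (Matrix.of fun i j : Fin (n + 1) =>
        if (i : ℕ) = 0 then hpolyZ c (0 + (j : ℕ)) else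
        hpolyZ c (-(i : ℕ) + (j : ℕ)) + (-1 : R) ^ (i : ℕ) * hpolyZ c ((i : ℕ) + (j : ℕ))) := by
  let A : Matrix (Fin n) (Fin n) R := Matrix.of fun k l =>
    (-1) ^ ((k : ℕ) + (l : ℕ)) * epolyZ c ((k : ℤ) - (l : ℕ))
  let B' : Matrix (Fin n) (Fin (n + 1)) R := Matrix.of fun k j =>
    (-1) ^ ((k : ℕ) + 1 + (j : ℕ)) * epoly c ((k : ℕ) + 1 + (j : ℕ))
  let B : Matrix (Fin n) (Fin (n + 1)) R := Matrix.of fun k j => hpoly c ((k : ℕ) + 1 + (j : ℕ))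
  let D : Matrix (Fin (n + 1)) (Fin (n + 1)) R := Matrix.of fun i j =>
    hpolyZ c (-(i : ℕ) + (j : ℕ))
  let P : Matrix (Fin (n + 1)) (Fin n) R := Matrix.of fun i l =>
    if i = l.succ then (-1) ^ ((l : ℕ) + 1) else 0
  have hA : A.det = 1 := by
    rw [Matrix.det_of_lowerTriangular]
    · apply Finset.prod_eq_one
      intro i _
      simp [A, epolyZ, epoly_zero', ← two_mul]
    · intro i j hij
      have hij' : (i : ℕ) < (j : ℕ) := hij
      simp only [A, Matrix.of_apply, epolyZ]
      rw [if_neg (by omega), mul_zero]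
  have hD : D.det = 1 := by
    rw [Matrix.det_of_upperTriangular]
    · apply Finset.prod_eq_one
      intro i _
      simp [D, hpolyZ_zero]
    · intro i j hij
      have hij' : (j : ℕ) < (i : ℕ) := hij
      simp only [D, Matrix.of_apply]
      rw [hpolyZ_neg _ _ (by omega)]
  have hrel : A * B + B' * D = 0 := by
    ext k j
    rw [Matrix.add_apply, Matrix.mul_apply, Matrix.mul_apply, Matrix.zero_apply]
    have hk := k.2
    have hj := j.2
    have e1 : ∑ l, A k l * B l j = ∑ t ∈ Finset.range ((k : ℕ) + 1),
        ((-1) ^ t * epoly c t) * hpoly c ((k : ℕ) + (j : ℕ) + 1 - t) := by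
      rw [← Finset.sum_range_reflect]
      simp only [A, B, Matrix.of_apply]
      rw [Fin.sum_univ_eq_sum_range (fun l => (-1) ^ ((k : ℕ) + l) * epolyZ c ((k : ℤ) - (l : ℕ)) *
        hpoly c (l + 1 + (j : ℕ))) n]
      symm
      apply Finset.sum_subset_zero_on_sdiff
      · intro t; simp; omega
      · intro t ht
        simp at ht
        rw [epolyZ, if_neg (by omega), mul_zero, zero_mul]
      · intro t ht
        simp at ht
        rw [epolyZ, if_pos (by omega)]
        have a1 : (k : ℕ) + 1 - 1 - t = k - t := by omega
        have a2 : ((k : ℤ) - (t : ℕ)).toNat = k - t := by omega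
        have a3 : (k : ℕ) + (j : ℕ) + 1 - (k - t) = t + 1 + j := by omega
        have a4 : (k : ℕ) + t = (k - t) + 2 * t := by omega
        rw [a1, a2, a3, a4, pow_add, pow_mul]
        simp
    have e2 : ∑ i, B' k i * D i j = ∑ t ∈ Finset.range ((j : ℕ) + 1),
        ((-1) ^ ((k : ℕ) + 1 + t) * epoly c ((k : ℕ) + 1 + t)) *
          hpoly c ((k : ℕ) + (j : ℕ) + 1 - ((k : ℕ) + 1 + t)) := by
      simp only [B', D, Matrix.of_apply]
      rw [Fin.sum_univ_eq_sum_range (fun l => (-1) ^ ((k : ℕ) + 1 + l) * epoly c ((k : ℕ) + 1 + l) *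
        hpolyZ c (-(l : ℤ) + (j : ℕ))) (n + 1)]
      symm
      apply Finset.sum_subset_zero_on_sdiff
      · intro t; simp; omega
      · intro t ht
        simp at ht
        rw [hpolyZ_neg _ _ (by omega), mul_zero]
      · intro t ht
        simp at ht
        have a1 : (-(t : ℤ) + (j : ℕ)) = (((k : ℕ) + (j : ℕ) + 1 - ((k : ℕ) + 1 + t) : ℕ) : ℤ) := by
          omega
        rw [a1, hpolyZ_natCast]
    rw [e1, e2, ← Finset.sum_range_add (fun t => ((-1) ^ t * epoly c t) *
      hpoly c ((k : ℕ) + (j : ℕ) + 1 - t))]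
    have := eh_rel c ((k : ℕ) + (j : ℕ) + 1) (by omega)
    rw [← this]
    congr 2
    omega
  have hDu : IsUnit D.det := by rw [hD]; exact isUnit_one
  have hB' : B' = -(A * B * D⁻¹) := by
    have h1 : B' * D = -(A * B) := by
      rw [eq_neg_iff_add_eq_zero, ← hrel]; exact add_comm _ _
    have h2 : B' * D * D⁻¹ = B' := Matrix.mul_nonsing_inv_cancel_right _ _ hDu
    rw [← h2, h1, Matrix.neg_mul]
  have hmain : (A - B' * P).det = (D + P * B).det := by
    have h1 : A - B' * P = A * (1 + (B * D⁻¹) * P) := by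
      rw [hB', Matrix.mul_add, Matrix.mul_one, Matrix.neg_mul, sub_neg_eq_add]
      simp only [Matrix.mul_assoc]
    have h2 : D + P * B = (1 + P * (B * D⁻¹)) * D := by
      rw [Matrix.add_mul, Matrix.one_mul, Matrix.mul_assoc, Matrix.mul_assoc,
        Matrix.nonsing_inv_mul _ hDu, Matrix.mul_one]
    rw [h1, h2, Matrix.det_mul, Matrix.det_mul, hA, hD, one_mul, mul_one,
      Matrix.det_one_add_mul_comm]
  let M : Matrix (Fin n) (Fin n) R := Matrix.of fun k l : Fin n =>
        epolyZ c ((k : ℤ) - (l : ℕ)) + (-1 : R) ^ (l : ℕ) * epoly c ((k : ℕ) + (l : ℕ) + 2)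
  let S : Fin n → R := fun k => (-1) ^ (k : ℕ)
  have hL : A - B' * P = Matrix.diagonal S * M * Matrix.diagonal S := by
    ext k l
    rw [Matrix.mul_diagonal, Matrix.diagonal_mul, Matrix.sub_apply, Matrix.mul_apply]
    simp only [A, B', P, M, S, Matrix.of_apply, mul_ite, mul_zero]
    rw [Finset.sum_ite_eq' Finset.univ l.succ, if_pos (Finset.mem_univ _), Fin.val_succ]
    have a1 : (k : ℕ) + 1 + ((l : ℕ) + 1) = k + l + 2 := by omega
    rw [a1]
    ring
  have hS : (Matrix.diagonal S).det * (Matrix.diagonal S).det = 1 := by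
    rw [← Matrix.det_mul, Matrix.diagonal_mul_diagonal]
    simp [S, ← pow_add, ← two_mul]
  have hLdet : (A - B' * P).det = M.det := by
    rw [hL, Matrix.det_mul, Matrix.det_mul, mul_right_comm, hS, one_mul]
  change M.det = _
  rw [← hLdet, hmain]
  congr 1
  ext i j
  rw [Matrix.add_apply, Matrix.mul_apply]
  simp only [D, P, B, Matrix.of_apply, ite_mul, zero_mul]
  refine Fin.cases ?_ (fun i => ?_) i
  · rw [Finset.sum_eq_zero]
    · simp
    · intro l _
      rw [if_neg (Fin.succ_ne_zero l).symm]
  · simp only [Fin.succ_inj]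
    rw [Finset.sum_ite_eq Finset.univ i, if_pos (Finset.mem_univ _), if_neg (by simp)]
    rw [Fin.val_succ]
    have : (((i : ℕ) + 1 : ℕ) : ℤ) + (j : ℕ) = (((i : ℕ) + 1 + (j : ℕ) : ℕ) : ℤ) := by
      push_cast; ring
    rw [this, hpolyZ_natCast]

/-- `det( e_{k-ℓ}(c) + (-1)^{ℓ-1} e_{k+ℓ}(c) ) = Σ_{α ∈ 𝒜, ℓ(α) ≤ n+1} s_α(c)`,
the sum over partitions with Frobenius leg lengths exceeding arm lengths by 1, of length
at most `n+1`.  Rows/columns are 0-indexed (`k, ℓ : Fin n` with 1-indexed values `k+1, ℓ+1`). -/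
theorem det_esymm_eq_sum_schur {R : Type*} [CommRing R] {n : ℕ} (hn : 1 ≤ n)
    (c : Fin (n + 1) → R) :
    Matrix.det (Matrix.of fun k l : Fin n =>
        epolyZ c ((k : ℤ) - (l : ℕ)) + (-1 : R) ^ (l : ℕ) * epoly c ((k : ℕ) + (l : ℕ) + 2)) =
      ∑ᶠ (α : Partn) (_ : α.InA ∧ α.len ≤ n + 1), schur c α := by
  rw [det_duality]
  obtain ⟨F, hF, hg⟩ := alt_expand (R := R) (V := Fin (n + 1) → R)
    (fun z j => hpolyZ c (z + (j : ℕ))) n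
  have h1 := hg Matrix.detRowAlternating
  have h2 : ∑ᶠ (α : Partn) (_ : α.InA ∧ α.len ≤ n + 1), schur c α = ∑ α ∈ F, schur c α := by
    rw [← finsum_mem_finset_eq_sum]
    apply finsum_congr
    intro α
    have : (α.InA ∧ α.len ≤ n + 1) = (α ∈ F) := propext (hF α).symm
    rw [this]
  rw [h2]
  have h3 : ∀ α ∈ F, schur c α = Matrix.detRowAlternating
      (fun i : Fin (n + 1) => fun j : Fin (n + 1) =>
        hpolyZ c ((α.parts i : ℤ) - (i : ℕ) + (j : ℕ))) := by
    intro α hα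
    exact (schur_pad c α (n + 1) ((hF α).1 hα).2).symm
  rw [Finset.sum_congr rfl h3, ← h1]
  change Matrix.det _ = Matrix.det _
  congr 1
  ext i j
  simp only [Matrix.of_apply]
  split_ifs <;> simp
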